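/- arXiv:2010.01879 — 4 statements merged into one kernel-verified Lean document; each statement's English description precedes it below -/
import Mathlib

section
/- Let n ≥ 3 be an odd integer and let 0 ≤ i < ⌊n/2⌋. Then for every 0 ≤ j < ⌊n/2⌋, the row vector Z_j = (e^{2πi(2j+1)k/n})_{0 ≤ k < n} satisfies Z_j · M_i(n) = λ_{i,j} · Z_j, where λ_{i,j} = 2cos((2j+1)(2i+1)π/(2n)) · e^{−i(2j+1)π/(2n)}. Moreover the all-ones row vector (1, 1, …, 1) satisfies (1, 1, …, 1) · M_i(n) = 0. -/
/-- The elementary matrix `M_i(n)`: the `n×n` complex matrix whose `(k,l)` entry is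
`(−1)^i` if `k − l ≡ i⌈n/2⌉ (mod n)`, `(−1)^{i+1}` if `k − l ≡ −(i+1)⌈n/2⌉ (mod n)`,
and `0` otherwise. -/
noncomputable def elemMat (n i : ℕ) : Matrix (Fin n) (Fin n) ℂ :=
  fun k l =>
    if ((k : ℤ) - (l : ℤ)) % n = ((i : ℤ) * (((n : ℤ) + 1) / 2)) % n then (-1 : ℂ) ^ i
    else if ((k : ℤ) - (l : ℤ)) % n = (-(((i : ℤ) + 1) * (((n : ℤ) + 1) / 2))) % n then
      (-1 : ℂ) ^ (i + 1)
    else 0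

theorem aux_sum (n : ℕ) (hn : 0 < n) (f : ℤ → ℂ) (hf : ∀ x y : ℤ, x % n = y % n → f x = f y)
    (l : Fin n) (a : ℤ) (s : ℂ) :
    ∑ k : Fin n, f ((k : ℕ) : ℤ) * (if (((k : ℕ) : ℤ) - ((l : ℕ) : ℤ)) % n = a % n then s else 0)
      = f (((l : ℕ) : ℤ) + a) * s := by
  have hn' : (0 : ℤ) < n := by exact_mod_cast hn
  have h0 := Int.emod_nonneg (((l : ℕ) : ℤ) + a) hn'.ne'
  have h1 := Int.emod_lt_of_pos (((l : ℕ) : ℤ) + a) hn'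
  have h2 : ((((((l : ℕ) : ℤ) + a) % n).toNat : ℕ) : ℤ) = (((l : ℕ) : ℤ) + a) % n :=
    Int.toNat_of_nonneg h0
  rw [Finset.sum_eq_single (⟨((((l : ℕ) : ℤ) + a) % n).toNat, by omega⟩ : Fin n)]
  · simp only [h2]
    rw [if_pos (by rw [Int.emod_sub_emod]; congr 1; ring)]
    rw [hf _ _ (Int.emod_emod_of_dvd _ dvd_rfl)]
  · intro k _ hk
    rw [if_neg, mul_zero]
    intro h
    apply hk
    apply Fin.ext
    have h3 : (((k : ℕ) : ℤ)) % n = (((l : ℕ) : ℤ) + a) % n := by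
      have := Int.ModEq.add_left ((l : ℕ) : ℤ) (show _ ≡ _ [ZMOD n] from h)
      have e : ((l : ℕ) : ℤ) + (((k : ℕ) : ℤ) - ((l : ℕ) : ℤ)) = ((k : ℕ) : ℤ) := by ring
      rw [e] at this
      exact this
    rw [Int.emod_eq_of_lt (by omega) (by have := k.2; omega)] at h3
    simp only
    omega
  · simp

theorem aux_mul (m i : ℕ) (hi : i < m) (f : ℤ → ℂ)
    (hf : ∀ x y : ℤ, x % (2 * m + 1 : ℕ) = y % (2 * m + 1 : ℕ) → f x = f y)
    (l : Fin (2 * m + 1)) :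
    Matrix.vecMul (fun k : Fin (2 * m + 1) => f ((k : ℕ) : ℤ)) (elemMat (2 * m + 1) i) l
      = f (((l : ℕ) : ℤ) + i * (m + 1)) * (-1) ^ i
        + f (((l : ℕ) : ℤ) + -((i + 1) * (m + 1))) * (-1) ^ (i + 1) := by
  rw [← aux_sum _ (by omega) f hf, ← aux_sum _ (by omega) f hf, ← Finset.sum_add_distrib]
  simp only [Matrix.vecMul, dotProduct]
  refine Finset.sum_congr rfl fun k _ => ?_
  rw [← mul_add]
  congr 1
  have hc : (((2 * m + 1 : ℕ) : ℤ) + 1) / 2 = m + 1 := by omega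
  simp only [elemMat, hc]
  have hne : ((i : ℤ) * (m + 1)) % (2 * m + 1 : ℕ) ≠ (-(((i : ℤ) + 1) * (m + 1))) % (2 * m + 1 : ℕ) := by
    intro h
    have h1 := Int.ModEq.dvd (show _ ≡ _ [ZMOD _] from h)
    have h2 : ((2 * m + 1 : ℕ) : ℤ) ∣ 2 * i + 1 := by
      obtain ⟨c, hc⟩ := h1
      refine ⟨-2 * c - (2 * i + 1), ?_⟩
      push_cast at hc ⊢
      linear_combination (-2) * hc
    have := Int.le_of_dvd (by omega) h2
    push_cast at this
    omega
  split_ifs with h1 h2 h2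
  · exact absurd (h1.symm.trans h2) hne
  · simp
  · simp
  · simp

/-- the rows `Z_j = (e^{2πi(2j+1)k/n})_k` are left eigenvectors of `M_i(n)`
with eigenvalue `2cos((2j+1)(2i+1)π/(2n))·e^{−i(2j+1)π/(2n)}`, and the all-ones row
vector is a left eigenvector with eigenvalue `0`. -/
theorem elemMat_left_eigenvectors (n : ℕ) (hn : 3 ≤ n) (hodd : Odd n)
    (i : ℕ) (hi : i < n / 2) :
    (∀ j : ℕ, j < n / 2 →
      Matrix.vecMul
          (fun k : Fin n =>
            Complex.exp (2 * (Real.pi : ℂ) * Complex.I * (2 * (j : ℂ) + 1) * ((k : ℕ) : ℂ) / (n : ℂ)))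
          (elemMat n i)
        = ((2 * (Real.cos ((2 * (j : ℝ) + 1) * (2 * (i : ℝ) + 1) * Real.pi / (2 * (n : ℝ))) : ℂ)) *
              Complex.exp (-(Complex.I * (2 * (j : ℂ) + 1) * (Real.pi : ℂ) / (2 * (n : ℂ))))) •
          (fun k : Fin n =>
            Complex.exp (2 * (Real.pi : ℂ) * Complex.I * (2 * (j : ℂ) + 1) * ((k : ℕ) : ℂ) / (n : ℂ))))
    ∧ Matrix.vecMul (fun _ : Fin n => (1 : ℂ)) (elemMat n i) = 0 := by
  obtain ⟨m, rfl⟩ := hodd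
  have him : i < m := by omega
  refine ⟨?_, ?_⟩
  · intro j _
    have hN : ((2 * m + 1 : ℕ) : ℂ) ≠ 0 := by exact Nat.cast_ne_zero.2 (by omega)
    have key := aux_mul m i him
      (fun x : ℤ => Complex.exp (2 * (Real.pi : ℂ) * Complex.I * (2 * (j : ℂ) + 1) * (x : ℂ) / ((2 * m + 1 : ℕ) : ℂ)))
      (by
        intro x y h
        obtain ⟨c, hc⟩ := Int.ModEq.dvd (show _ ≡ _ [ZMOD _] from h.symm)
        have hx : x = y + ((2 * m + 1 : ℕ) : ℤ) * c := by linarith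
        refine Complex.exp_eq_exp_iff_exists_int.2 ⟨(2 * j + 1) * c, ?_⟩
        rw [hx]
        push_cast at hN ⊢
        field_simp)
    funext l
    have k2 := key l
    simp only [Int.cast_natCast] at k2
    rw [k2]
    simp only [Pi.smul_apply, smul_eq_mul]
    rw [Complex.ofReal_cos, Complex.two_cos]
    have hm1 : ∀ p : ℕ, (-1 : ℂ) ^ p = Complex.exp (p * (Real.pi * Complex.I)) := by
      intro p
      rw [Complex.exp_nat_mul, Complex.exp_pi_mul_I]
    simp only [hm1]
    rw [add_mul (Complex.exp _), add_mul (Complex.exp _ * Complex.exp _), ← Complex.exp_add, ← Complex.exp_add, ← Complex.exp_add,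
      ← Complex.exp_add, ← Complex.exp_add, ← Complex.exp_add]
    congr 1
    · refine Complex.exp_eq_exp_iff_exists_int.2 ⟨(j + 1) * i, ?_⟩
      push_cast at hN ⊢
      field_simp
      ring
    · refine Complex.exp_eq_exp_iff_exists_int.2 ⟨-(j * (i + 1)), ?_⟩
      push_cast at hN ⊢
      field_simp
      ring
  · funext l
    have := aux_mul m i him (fun _ => 1) (by intros; rfl) l
    rw [this]
    simp [pow_succ]
end

section
/- For all integers j ≥ 0 and k ≥ 1, setting θ = (2j+1)π/(2(2k+1)), the following identity holds: (Σ_{i=0}^{k−1} 4(k−i)·cos((2i+1)θ)) · sin²(θ) = cos(θ). -/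
theorem aux1 (θ : ℝ) (n : ℕ) :
    (∑ i ∈ Finset.range n, Real.cos ((2 * (i : ℝ) + 1) * θ)) * (2 * Real.sin θ)
      = Real.sin (2 * (n : ℝ) * θ) := by
  induction n with
  | zero => simp
  | succ n ih =>
    rw [Finset.sum_range_succ, add_mul, ih]
    have e1 : 2 * (n : ℝ) * θ = (2 * (n : ℝ) + 1) * θ - θ := by ring
    have e2 : 2 * ((n + 1 : ℕ) : ℝ) * θ = (2 * (n : ℝ) + 1) * θ + θ := by push_cast; ring
    rw [e1, e2, Real.sin_sub, Real.sin_add]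
    ring

theorem aux2 (θ : ℝ) (n : ℕ) :
    (∑ i ∈ Finset.range n, 4 * ((n : ℝ) - (i : ℝ)) * Real.cos ((2 * (i : ℝ) + 1) * θ)) *
        Real.sin θ ^ 2 = Real.cos θ - Real.cos ((2 * (n : ℝ) + 1) * θ) := by
  induction n with
  | zero => simp
  | succ n ih =>
    have h : (∑ i ∈ Finset.range (n + 1),
          4 * (((n + 1 : ℕ) : ℝ) - (i : ℝ)) * Real.cos ((2 * (i : ℝ) + 1) * θ))
        = (∑ i ∈ Finset.range n, 4 * ((n : ℝ) - (i : ℝ)) * Real.cos ((2 * (i : ℝ) + 1) * θ))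
          + 4 * ∑ i ∈ Finset.range (n + 1), Real.cos ((2 * (i : ℝ) + 1) * θ) := by
      have h0 : (∑ i ∈ Finset.range n, 4 * ((n : ℝ) - (i : ℝ)) * Real.cos ((2 * (i : ℝ) + 1) * θ))
          = ∑ i ∈ Finset.range (n + 1),
            4 * ((n : ℝ) - (i : ℝ)) * Real.cos ((2 * (i : ℝ) + 1) * θ) := by
        rw [Finset.sum_range_succ]; simp
      rw [h0, Finset.mul_sum, ← Finset.sum_add_distrib]
      refine Finset.sum_congr rfl fun i _ => ?_
      push_cast; ring
    have h1 := aux1 θ (n + 1)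
    rw [h, add_mul, ih]
    have e1 : (2 * (n : ℝ) + 1) * θ = 2 * ((n + 1 : ℕ) : ℝ) * θ - θ := by push_cast; ring
    have e2 : (2 * ((n + 1 : ℕ) : ℝ) + 1) * θ = 2 * ((n + 1 : ℕ) : ℝ) * θ + θ := by ring
    rw [e1, e2, Real.cos_sub, Real.cos_add]
    linear_combination (2 * Real.sin θ) * h1

/-- for all integers `j ≥ 0`, `k ≥ 1` and `θ = (2j+1)π/(2(2k+1))`,
`(Σ_{i=0}^{k−1} 4(k−i)cos((2i+1)θ)) · sin²θ = cos θ`. -/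
theorem trig_sum_identity (j k : ℕ) (hk : 1 ≤ k) (θ : ℝ)
    (hθ : θ = (2 * (j : ℝ) + 1) * Real.pi / (2 * (2 * (k : ℝ) + 1))) :
    (∑ i ∈ Finset.range k, 4 * ((k : ℝ) - (i : ℝ)) * Real.cos ((2 * (i : ℝ) + 1) * θ)) *
        Real.sin θ ^ 2 = Real.cos θ := by
  have hz : Real.cos ((2 * (k : ℝ) + 1) * θ) = 0 := by
    rw [Real.cos_eq_zero_iff]
    refine ⟨j, ?_⟩
    have : (2 * (k : ℝ) + 1) ≠ 0 := by positivity
    rw [hθ]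
    push_cast
    field_simp
  rw [aux2, hz, sub_zero]
end

section
/- For all integers j, k with 0 ≤ j < k, setting θ = (2j+1)π/(2(2k+1)), one has Σ_{i=0}^{k−1} 4(k−i)·cos((2i+1)θ) = cos(θ)/sin²(θ), and this quantity is strictly positive. (This sum equals the modulus of the eigenvalue λ_j of the Sub Rosa substitution expansion for n = 2k+1, since the Sub Rosa abelianized edgeword satisfies [Σ(n)]_i = n − (2i+1) = 2(k−i).) -/
theorem aux_C (θ : ℝ) (k : ℕ) :
    2 * Real.sin θ * (∑ i ∈ Finset.range k, Real.cos ((2 * (i : ℝ) + 1) * θ)) =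
      Real.sin (2 * (k : ℝ) * θ) := by
  induction k with
  | zero => simp
  | succ k ih =>
    rw [Finset.sum_range_succ, mul_add, ih]
    have e1 : 2 * (k : ℝ) * θ = (2 * (k : ℝ) + 1) * θ - θ := by ring
    have e2 : 2 * ((k + 1 : ℕ) : ℝ) * θ = (2 * (k : ℝ) + 1) * θ + θ := by push_cast; ring
    rw [e1, e2, Real.sin_sub, Real.sin_add]
    ring

theorem aux_S (θ : ℝ) (k : ℕ) :
    (∑ i ∈ Finset.range k, 4 * ((k : ℝ) - (i : ℝ)) * Real.cos ((2 * (i : ℝ) + 1) * θ)) *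
      Real.sin θ ^ 2 = Real.cos θ - Real.cos ((2 * (k : ℝ) + 1) * θ) := by
  induction k with
  | zero => simp
  | succ k ih =>
    have h : (∑ i ∈ Finset.range (k + 1),
        4 * (((k + 1 : ℕ) : ℝ) - (i : ℝ)) * Real.cos ((2 * (i : ℝ) + 1) * θ)) =
        (∑ i ∈ Finset.range k, 4 * ((k : ℝ) - (i : ℝ)) * Real.cos ((2 * (i : ℝ) + 1) * θ)) +
        4 * ∑ i ∈ Finset.range (k + 1), Real.cos ((2 * (i : ℝ) + 1) * θ) := by
      rw [Finset.sum_range_succ, Finset.sum_range_succ, mul_add, Finset.mul_sum, ← add_assoc,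
        ← Finset.sum_add_distrib]
      congr 1
      · apply Finset.sum_congr rfl
        intro i _
        push_cast
        ring
      · push_cast
        ring
    have hC := aux_C θ (k + 1)
    have e1 : (2 * (k : ℝ) + 1) * θ = 2 * ((k + 1 : ℕ) : ℝ) * θ - θ := by push_cast; ring
    have e2 : (2 * ((k + 1 : ℕ) : ℝ) + 1) * θ = 2 * ((k + 1 : ℕ) : ℝ) * θ + θ := by ring
    rw [h, add_mul, ih, e1, e2, Real.cos_sub, Real.cos_add]
    linear_combination 2 * Real.sin θ * hC

/-- for integers `0 ≤ j < k` and `θ = (2j+1)π/(2(2k+1))`, the sum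
`Σ_{i=0}^{k−1} 4(k−i)cos((2i+1)θ)` equals `cos θ / sin²θ` and is strictly positive. -/
theorem trig_sum_eq_and_pos (j k : ℕ) (hjk : j < k) (θ : ℝ)
    (hθ : θ = (2 * (j : ℝ) + 1) * Real.pi / (2 * (2 * (k : ℝ) + 1))) :
    (∑ i ∈ Finset.range k, 4 * ((k : ℝ) - (i : ℝ)) * Real.cos ((2 * (i : ℝ) + 1) * θ)) =
        Real.cos θ / Real.sin θ ^ 2 ∧
    0 < ∑ i ∈ Finset.range k, 4 * ((k : ℝ) - (i : ℝ)) * Real.cos ((2 * (i : ℝ) + 1) * θ) := by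
  have hk : (0 : ℝ) < 2 * (k : ℝ) + 1 := by positivity
  have hj : (j : ℝ) < k := by exact_mod_cast hjk
  have hpi := Real.pi_pos
  have h0 : 0 < θ := by rw [hθ]; positivity
  have h1 : θ < Real.pi / 2 := by
    rw [hθ, div_lt_div_iff₀ (by positivity) (by norm_num)]
    nlinarith
  have hs : 0 < Real.sin θ := Real.sin_pos_of_pos_of_lt_pi h0 (by linarith)
  have hc : 0 < Real.cos θ := Real.cos_pos_of_mem_Ioo ⟨by linarith, h1⟩
  have hz : Real.cos ((2 * (k : ℝ) + 1) * θ) = 0 := by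
    rw [Real.cos_eq_zero_iff]
    refine ⟨j, ?_⟩
    rw [hθ]
    push_cast
    field_simp
  have hS := aux_S θ k
  rw [hz, sub_zero] at hS
  have key := eq_div_of_mul_eq (by positivity) hS
  refine ⟨key, ?_⟩
  rw [key]
  positivity
end

section
/- Let n ≥ 7 be an odd integer and write n = 2k+1 (so k ≥ 3). Then for j = 0 and for j = 1, the quantity |λ_j(n)| := Σ_{i=0}^{k−1} (n − (2i+1)) · 2cos((2j+1)(2i+1)π/(2n)) is strictly greater than 1. -/
theorem subRosa_aux (N θ : ℝ) (m : ℕ) :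
    (∑ i ∈ Finset.range m, (N - (2 * (i : ℝ) + 1)) * (2 * Real.cos ((2 * (i : ℝ) + 1) * θ)))
      * Real.sin θ ^ 2 =
    Real.cos θ - Real.cos ((2 * (m : ℝ) + 1) * θ)
      + (N - 2 * m - 1) * Real.sin θ * Real.sin (2 * m * θ) := by
  induction m with
  | zero => simp
  | succ m ih =>
    rw [Finset.sum_range_succ, add_mul, ih]
    have e1 : (2 * (m : ℝ)) * θ = (2 * (m : ℝ) + 1) * θ - θ := by ring
    have e2 : (2 * ((m + 1 : ℕ) : ℝ)) * θ = (2 * (m : ℝ) + 1) * θ + θ := by push_cast; ring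
    have e3 : (2 * ((m + 1 : ℕ) : ℝ) + 1) * θ = (2 * (m : ℝ) + 1) * θ + θ + θ := by
      push_cast; ring
    rw [e1, e2, e3]
    generalize (2 * (m : ℝ) + 1) * θ = a
    rw [Real.cos_add (a + θ), Real.sin_add, Real.cos_add, Real.sin_sub]
    push_cast
    linear_combination (Real.cos a) * (Real.sin_sq_add_cos_sq θ)

/-- for odd `n = 2k+1 ≥ 7`, the moduli of the Sub Rosa eigenvalues
`|λ_j(n)| = Σ_{i=0}^{k−1} (n−(2i+1))·2cos((2j+1)(2i+1)π/(2n))` exceed `1` for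
`j = 0` and `j = 1`. -/
theorem subRosa_eigenvalues_gt_one (n k : ℕ) (hn : n = 2 * k + 1) (hk : 3 ≤ k) :
    ∀ j : ℕ, j ≤ 1 →
      1 < ∑ i ∈ Finset.range k,
            ((n : ℝ) - (2 * (i : ℝ) + 1)) *
              (2 * Real.cos ((2 * (j : ℝ) + 1) * (2 * (i : ℝ) + 1) * Real.pi / (2 * (n : ℝ)))) := by
  intro j hj
  have hnk : (n : ℝ) = 2 * k + 1 := by rw [hn]; push_cast; ring
  have hk' : (3 : ℝ) ≤ k := by exact_mod_cast hk
  have hj' : (j : ℝ) ≤ 1 := by exact_mod_cast hj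
  have hj0 : (0 : ℝ) ≤ j := j.cast_nonneg
  have hn0 : (0 : ℝ) < n := by linarith
  have hpi := Real.pi_pos
  obtain ⟨θ, hθ⟩ : ∃ θ : ℝ, θ = (2 * (j : ℝ) + 1) * Real.pi / (2 * n) := ⟨_, rfl⟩
  have h := subRosa_aux n θ k
  have hs : ∀ i : ℕ, (2 * (j : ℝ) + 1) * (2 * (i : ℝ) + 1) * Real.pi / (2 * (n : ℝ))
      = (2 * (i : ℝ) + 1) * θ := by intro i; rw [hθ]; ring
  simp only [hs]
  have hc : Real.cos ((2 * (k : ℝ) + 1) * θ) = 0 := by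
    rw [← hnk, Real.cos_eq_zero_iff]
    refine ⟨j, ?_⟩
    rw [hθ]; push_cast; field_simp
  rw [hc, show (n : ℝ) - 2 * k - 1 = 0 by rw [hnk]; ring] at h
  have hpos : 0 < θ := by rw [hθ]; positivity
  have hlt : θ < Real.pi / 4 := by
    rw [hθ, div_lt_div_iff₀ (by positivity) (by norm_num)]
    nlinarith
  have h1 : 0 < Real.sin θ := Real.sin_pos_of_pos_of_lt_pi hpos (by linarith)
  have h2 : Real.sin θ < Real.cos θ := by
    rw [← Real.cos_pi_div_two_sub]
    exact Real.cos_lt_cos_of_nonneg_of_le_pi hpos.le (by linarith) (by linarith)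
  have h3 := Real.sin_le_one θ
  have h4 : Real.sin θ ^ 2 ≤ Real.sin θ := by nlinarith
  by_contra hcon
  push Not at hcon
  have := mul_le_mul_of_nonneg_right hcon (sq_nonneg (Real.sin θ))
  linarith
end
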